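/- There exists a constant C₂ > 0 such that for every v ∈ L²(𝕋^d) with ∫_{𝕋^d} v(ξ) dξ = 0 the spectral gap (Poincaré-type) inequality (1/2) ∫_{𝕋^d} ∫_{ℝ^d} a(ξ−η) (v(η) − v(ξ))² dη dξ ≥ C₂ ‖v‖²_{L²(𝕋^d)} holds (with v extended ℤ^d-periodically to ℝ^d). -/

import Mathlib

open MeasureTheory

noncomputable section

/-- The periodicity cell `[0,1)^d`, identified with the torus `𝕋^d`. -/
def cube (d : ℕ) : Set (Fin d → ℝ) := Set.univ.pi fun _ => Set.Ico (0 : ℝ) 1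

/-!
For periodic `v`, let `N z = ‖v(· - z) - v‖_p`, the norm being taken over one period cell `D`. This
function is even and subadditive, so `N y ≤ N (y + x) + N x`; integrating against
`min |a x| |a (y + x)|` gives `N y * ∫ min |a x| |a (y + x)| dx ≤ 2 * ∫ |a| N`. Translation is
continuous in `L¹`, hence for small `y` the overlap is at least half the mass of `a` and `N y` is
bounded by a multiple of `∫ |a| N`. Subadditivity extends this bound from small `y` to bounded sets,
in particular to `D`. A mean-zero `v` satisfies `‖v‖_p ≤ sup_D N`, because by Jensen's inequality
`|v x|^p` is at most the average of `|v z - v x|^p` over `z ∈ D`. Finally, Hölder's inequality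
bounds `(∫ |a| N)^p` by a multiple of `∫ |a| N^p`, which by Tonelli is the nonlocal energy.
-/

open Filter Set
open scoped ENNReal NNReal Pointwise Topology

lemma apply_nsmul_le_of_subadditive {G : Type*} [AddCommMonoid G] {N : G → ℝ≥0∞}
    (hadd : ∀ x y, N (x + y) ≤ N x + N y) {n : ℕ} (hn : n ≠ 0) (x : G) :
    N (n • x) ≤ n * N x := by
  simpa using Finset.le_sum_nonempty_of_subadditive N hadd
    (Finset.nonempty_range_iff.2 hn) fun _ => x

lemma mul_lintegral_min_translate_le {G : Type*} [AddGroup G] [MeasurableSpace G]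
    [MeasurableAdd G] {μ : Measure G} [μ.IsAddLeftInvariant] {w N : G → ℝ≥0∞}
    (hw : AEMeasurable w μ) (hN : AEMeasurable N μ) (hadd : ∀ x y, N (x + y) ≤ N x + N y)
    (hneg : ∀ x, N (-x) = N x) (y : G) :
    N y * ∫⁻ x, min (w x) (w (y + x)) ∂μ ≤ 2 * ∫⁻ x, w x * N x ∂μ := by
  have hy (x : G) : N y ≤ N (y + x) + N x := by
    simpa [hneg] using hadd (y + x) (-x)
  calc N y * ∫⁻ x, min (w x) (w (y + x)) ∂μ
      ≤ ∫⁻ x, N y * min (w x) (w (y + x)) ∂μ := lintegral_const_mul_le _ _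
    _ ≤ ∫⁻ x, (w (y + x) * N (y + x) + w x * N x) ∂μ := by
        refine lintegral_mono fun x => ?_
        calc N y * min (w x) (w (y + x))
            ≤ (N (y + x) + N x) * min (w x) (w (y + x)) := by gcongr; exact hy x
          _ = min (w x) (w (y + x)) * N (y + x) + min (w x) (w (y + x)) * N x := by ring
          _ ≤ w (y + x) * N (y + x) + w x * N x := by
              gcongr
              exacts [min_le_right _ _, min_le_left _ _]
    _ = 2 * ∫⁻ x, w x * N x ∂μ := by
        have hwN : AEMeasurable (fun x => w x * N x) μ := hw.mul hN
        rw [lintegral_add_right' _ hwN, lintegral_add_left_eq_self (fun x => w x * N x) y, two_mul]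

section Translation

variable {G F : Type*} [AddGroup G] [TopologicalSpace G] [IsTopologicalAddGroup G]
  [MeasurableSpace G] [BorelSpace G] {μ : Measure G} [μ.IsAddLeftInvariant]
  [IsLocallyFiniteMeasure μ] [μ.InnerRegularCompactLTTop] [NormedAddCommGroup F]

lemma tendsto_eLpNorm_translate_sub {p : ℝ≥0∞} (hp : 1 ≤ p) (hp' : p ≠ ∞) {f : G → F}
    (hf : MemLp f p μ) :
    Tendsto (fun y => eLpNorm (fun x => f (y + x) - f x) p μ) (𝓝 0) (𝓝 0) := by
  have : Fact (1 ≤ p) := ⟨hp⟩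
  have : Fact (p ≠ ∞) := ⟨hp'⟩
  have hcont : Continuous fun y : G => DomAddAct.mk y +ᵥ hf.toLp f := by fun_prop
  simpa [DomAddAct.mk_vadd_toLp, Lp.edist_toLp_toLp, Pi.sub_def] using
    tendsto_iff_edist_tendsto_0.1 (hcont.tendsto 0)

lemma eventually_lintegral_enorm_le_two_mul_lintegral_min_translate {f : G → F}
    (hf : Integrable f μ) :
    ∀ᶠ y in 𝓝 (0 : G), ∫⁻ x, ‖f x‖ₑ ∂μ ≤ 2 * ∫⁻ x, min ‖f x‖ₑ ‖f (y + x)‖ₑ ∂μ := by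
  rcases eq_or_ne (∫⁻ x, ‖f x‖ₑ ∂μ) 0 with h0 | h0
  · simp [h0]
  filter_upwards [(tendsto_eLpNorm_translate_sub le_rfl ENNReal.one_ne_top
    (memLp_one_iff_integrable.2 hf)).eventually_le_const (ENNReal.half_pos h0)] with y hy
  rw [eLpNorm_one_eq_lintegral_enorm] at hy
  have hpt (x : G) : ‖f x‖ₑ ≤ min ‖f x‖ₑ ‖f (y + x)‖ₑ + ‖f (y + x) - f x‖ₑ := by
    rw [min_add, le_min_iff]
    exact ⟨le_self_add, by simpa using enorm_sub_le (a := f (y + x)) (b := f (y + x) - f x)⟩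
  have hle : ∫⁻ x, ‖f x‖ₑ ∂μ
      ≤ ∫⁻ x, min ‖f x‖ₑ ‖f (y + x)‖ₑ ∂μ + (∫⁻ x, ‖f x‖ₑ ∂μ) / 2 :=
    calc ∫⁻ x, ‖f x‖ₑ ∂μ
        ≤ ∫⁻ x, (min ‖f x‖ₑ ‖f (y + x)‖ₑ + ‖f (y + x) - f x‖ₑ) ∂μ := lintegral_mono hpt
      _ = ∫⁻ x, min ‖f x‖ₑ ‖f (y + x)‖ₑ ∂μ + ∫⁻ x, ‖f (y + x) - f x‖ₑ ∂μ :=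
          lintegral_add_left' (hf.1.enorm.min
            (hf.1.comp_measurePreserving (measurePreserving_add_left μ y)).enorm) _
      _ ≤ _ := by gcongr
  have hhalf : (∫⁻ x, ‖f x‖ₑ ∂μ) / 2 ≤ ∫⁻ x, min ‖f x‖ₑ ‖f (y + x)‖ₑ ∂μ := by
    rw [← ENNReal.sub_half hf.2.ne]
    exact tsub_le_iff_right.2 hle
  rwa [ENNReal.div_le_iff_le_mul (by simp) (by simp), mul_comm] at hhalf

end Translation

lemma exists_forall_subadditive_le_mul_lintegral {E F : Type*} [NormedAddCommGroup E]
    [NormedSpace ℝ E] [MeasurableSpace E] [BorelSpace E] {μ : Measure E} [μ.IsAddLeftInvariant]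
    [IsLocallyFiniteMeasure μ] [μ.InnerRegularCompactLTTop] [NormedAddCommGroup F]
    {f : E → F} (hf : Integrable f μ) (hf0 : ¬ f =ᵐ[μ] 0)
    {s : Set E} (hs : Bornology.IsBounded s) :
    ∃ C : ℝ≥0, ∀ N : E → ℝ≥0∞, AEMeasurable N μ → (∀ x y, N (x + y) ≤ N x + N y) →
      (∀ x, N (-x) = N x) → ∀ z ∈ s, N z ≤ C * ∫⁻ x, ‖f x‖ₑ * N x ∂μ := by
  set A := ∫⁻ x, ‖f x‖ₑ ∂μ with hA
  have hA0 : A ≠ 0 := by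
    rwa [hA, ← eLpNorm_one_eq_lintegral_enorm, ne_eq, eLpNorm_eq_zero_iff hf.1 one_ne_zero]
  have hA' : A ≠ ∞ := hf.2.ne
  obtain ⟨n, hn, hn0⟩ : ∃ n : ℕ, (∀ y ∈ (n : ℝ)⁻¹ • s,
      A ≤ 2 * ∫⁻ x, min ‖f x‖ₑ ‖f (y + x)‖ₑ ∂μ) ∧ n ≠ 0 :=
    ((((NormedSpace.isVonNBounded_of_isBounded ℝ hs).tendsto_smallSets_nhds.comp
      tendsto_inv_atTop_nhds_zero_nat).eventually (eventually_smallSets_forall.2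
        (eventually_lintegral_enorm_le_two_mul_lintegral_min_translate hf))).and
      (eventually_ne_atTop 0)).exists
  refine ⟨(n * (4 / A)).toNNReal, fun N hN hadd hneg z hz => ?_⟩
  rw [ENNReal.coe_toNNReal (by finiteness)]
  set y := (n : ℝ)⁻¹ • z
  have hsmall : N y * A ≤ 4 * ∫⁻ x, ‖f x‖ₑ * N x ∂μ :=
    calc N y * A
        ≤ N y * (2 * ∫⁻ x, min ‖f x‖ₑ ‖f (y + x)‖ₑ ∂μ) := by
          gcongr
          exact hn y (smul_mem_smul_set hz)
      _ = 2 * (N y * ∫⁻ x, min ‖f x‖ₑ ‖f (y + x)‖ₑ ∂μ) := by ring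
      _ ≤ 2 * (2 * ∫⁻ x, ‖f x‖ₑ * N x ∂μ) := by
          gcongr 2 * ?_
          exact mul_lintegral_min_translate_le hf.1.enorm hN hadd hneg y
      _ = 4 * ∫⁻ x, ‖f x‖ₑ * N x ∂μ := by ring
  calc N z = N (n • y) := by
        rw [← Nat.cast_smul_eq_nsmul ℝ, smul_inv_smul₀ (Nat.cast_ne_zero.2 hn0)]
    _ ≤ n * N y := apply_nsmul_le_of_subadditive hadd hn0 y
    _ ≤ n * ((4 * ∫⁻ x, ‖f x‖ₑ * N x ∂μ) / A) := by
        gcongr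
        rwa [ENNReal.le_div_iff_mul_le (.inl hA0) (.inl hA')]
    _ = n * (4 / A) * ∫⁻ x, ‖f x‖ₑ * N x ∂μ := by
        simp only [div_eq_mul_inv]
        ring

section Averages

variable {α G : Type*} [MeasurableSpace α] {μ : Measure α} [NormedAddCommGroup G]
  [NormedSpace ℝ G] [CompleteSpace G]

lemma eLpNorm_const_average_le {p : ℝ≥0∞} (hp : 1 ≤ p) (f : α → G) :
    eLpNorm (fun _ => ⨍ x, f x ∂μ) p μ ≤ eLpNorm f p μ := by
  simpa only [average_eq, eLpNorm_congr_ae (condExp_bot_ae_eq f)] using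
    eLpNorm_condExp_le_eLpNorm (m := ⊥) (μ := μ) f hp

lemma eLpNorm_const_le_eLpNorm_sub_const [IsFiniteMeasure μ] {p : ℝ≥0∞} (hp : 1 ≤ p)
    {f : α → G} (hf : Integrable f μ) (hf0 : ∫ x, f x ∂μ = 0) (c : G) :
    eLpNorm (fun _ : α => c) p μ ≤ eLpNorm (fun x => f x - c) p μ := by
  rcases eq_zero_or_neZero μ with rfl | hμ
  · simp
  have havg : ⨍ x, (f x - c) ∂μ = -c := by
    rw [average_eq, integral_sub hf (integrable_const c), hf0, zero_sub, smul_neg, ← average_eq,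
      average_const]
  have hneg : eLpNorm (fun _ : α => -c) p μ = eLpNorm (fun _ => c) p μ :=
    eLpNorm_neg (fun _ => c) p μ
  simpa only [havg, hneg] using eLpNorm_const_average_le (μ := μ) hp fun x => f x - c

end Averages

lemma lintegral_mul_rpow_le {α : Type*} [MeasurableSpace α] {μ : Measure α} {w g : α → ℝ≥0∞}
    (hw : AEMeasurable w μ) (hg : AEMeasurable g μ) {p : ℝ} (hp : 1 ≤ p) :
    (∫⁻ x, w x * g x ∂μ) ^ p ≤ (∫⁻ x, w x ∂μ) ^ (p - 1) * ∫⁻ x, w x * g x ^ p ∂μ := by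
  have hp0 : 0 < p := one_pos.trans_le hp
  have hq : 0 ≤ 1 - p⁻¹ := sub_nonneg.2 (inv_le_one_of_one_le₀ hp)
  have hsplit (x : α) : w x * g x = w x ^ (1 - p⁻¹) * (w x * g x ^ p) ^ p⁻¹ := by
    rw [ENNReal.mul_rpow_of_nonneg _ _ (by positivity), ENNReal.rpow_rpow_inv hp0.ne', ← mul_assoc,
      ← ENNReal.rpow_add_of_nonneg _ _ hq (by positivity), sub_add_cancel, ENNReal.rpow_one]
  have holder : ∫⁻ x, w x * g x ∂μ
      ≤ (∫⁻ x, w x ∂μ) ^ (1 - p⁻¹) * (∫⁻ x, w x * g x ^ p ∂μ) ^ p⁻¹ :=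
    (lintegral_congr hsplit).trans_le (ENNReal.lintegral_mul_norm_pow_le hw
      (hw.mul (hg.pow_const p)) hq (by positivity) (sub_add_cancel _ _))
  calc (∫⁻ x, w x * g x ∂μ) ^ p
      ≤ ((∫⁻ x, w x ∂μ) ^ (1 - p⁻¹) * (∫⁻ x, w x * g x ^ p ∂μ) ^ p⁻¹) ^ p := by gcongr
    _ = (∫⁻ x, w x ∂μ) ^ (p - 1) * ∫⁻ x, w x * g x ^ p ∂μ := by
        rw [ENNReal.mul_rpow_of_nonneg _ _ hp0.le, ENNReal.rpow_inv_rpow hp0.ne',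
          ← ENNReal.rpow_mul, sub_mul, one_mul, inv_mul_cancel₀ hp0.ne']

lemma integral_integral_norm_eq_toReal {α β F : Type*} [MeasurableSpace α] [MeasurableSpace β]
    {μ : Measure α} {ν : Measure β} [SFinite μ] [SFinite ν] [NormedAddCommGroup F] {f : α → β → F}
    (hf : AEStronglyMeasurable f.uncurry (μ.prod ν))
    (hfin : ∫⁻ x, ∫⁻ y, ‖f x y‖ₑ ∂ν ∂μ ≠ ∞) :
    ∫ x, ∫ y, ‖f x y‖ ∂ν ∂μ = (∫⁻ x, ∫⁻ y, ‖f x y‖ₑ ∂ν ∂μ).toReal := by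
  have hprod : ∫⁻ z, ‖f.uncurry z‖ₑ ∂(μ.prod ν) = ∫⁻ x, ∫⁻ y, ‖f x y‖ₑ ∂ν ∂μ :=
    lintegral_prod _ hf.enorm
  have hint : Integrable f.uncurry (μ.prod ν) :=
    ⟨hf, hprod.trans_lt hfin.lt_top⟩
  rw [← hprod, ← integral_norm_eq_lintegral_enorm hf, integral_prod _ hint.norm]
  rfl

section PeriodicFunctions

variable {E G : Type*} [AddCommGroup E] [MeasurableSpace E] [MeasurableAdd E] {μ : Measure E}
  [μ.IsAddLeftInvariant] {L : AddSubgroup E} [Countable L] {D : Set E}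

lemma setLIntegral_add_right_of_periodic (hD : IsAddFundamentalDomain L D μ) {f : E → ℝ≥0∞}
    (hf : ∀ g ∈ L, Function.Periodic f g) (z : E) :
    ∫⁻ x in D, f (x + z) ∂μ = ∫⁻ x in D, f x ∂μ := by
  have hinv (g : L) (x : E) : f (g +ᵥ x) = f x := by
    rw [AddSubgroup.vadd_def, vadd_eq_add, add_comm, hf g g.2]
  have himage : z +ᵥ D = (· + z) '' D := by
    simp only [← image_vadd, vadd_eq_add, add_comm z]
  rw [hD.setLIntegral_eq (hD.vadd_of_comm z) f hinv, himage,
    (measurePreserving_add_right μ z).setLIntegral_comp_emb (measurableEmbedding_addRight z)]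

variable [NormedAddCommGroup G]

lemma eLpNorm_add_right_of_periodic (hD : IsAddFundamentalDomain L D μ) {f : E → G}
    (hf : ∀ g ∈ L, Function.Periodic f g) (p : ℝ≥0) (z : E) :
    eLpNorm (fun x => f (x + z)) p (μ.restrict D) = eLpNorm f p (μ.restrict D) := by
  rcases eq_or_ne p 0 with rfl | hp
  · simp
  rw [eLpNorm_nnreal_eq_lintegral hp, eLpNorm_nnreal_eq_lintegral hp,
    setLIntegral_add_right_of_periodic hD (f := fun x => ‖f x‖ₑ ^ (p : ℝ))
      (fun g hg => (hf g hg).comp fun u => ‖u‖ₑ ^ (p : ℝ))]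

end PeriodicFunctions

/-- The `L^p` modulus of continuity under translation of `v`, namely `z ↦ ‖v(· - z) - v‖_p`. -/
def translationModulus {E G : Type*} [Sub E] [MeasurableSpace E] [NormedAddCommGroup G]
    (v : E → G) (p : ℝ≥0∞) (ρ : Measure E) (z : E) : ℝ≥0∞ :=
  eLpNorm (fun x => v (x - z) - v x) p ρ

section TranslationModulus

variable {E G : Type*} [AddCommGroup E] [MeasurableSpace E] [NormedAddCommGroup G] {v : E → G}

section MeasurableModulus

variable [MeasurableSub₂ E]

lemma stronglyMeasurable_translate_sub (hv : StronglyMeasurable v) :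
    StronglyMeasurable fun q : E × E => v (q.2 - q.1) - v q.2 :=
  (hv.comp_measurable (measurable_snd.sub measurable_fst)).sub
    (hv.comp_measurable measurable_snd)

lemma measurable_translationModulus (hv : StronglyMeasurable v) (p : ℝ≥0) (ρ : Measure E)
    [SFinite ρ] : Measurable (translationModulus v p ρ) := by
  rcases eq_or_ne p 0 with rfl | hp
  · rw [show translationModulus v (0 : ℝ≥0) ρ = 0 from funext fun z => eLpNorm_exponent_zero]
    exact measurable_zero
  rw [show translationModulus v p ρ = _ from funext fun z => eLpNorm_nnreal_eq_lintegral hp]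
  exact ((stronglyMeasurable_translate_sub hv).enorm.pow_const
    (p : ℝ)).lintegral_prod_right'.pow_const _

end MeasurableModulus

variable [MeasurableAdd E] {μ : Measure E} [μ.IsAddLeftInvariant] {L : AddSubgroup E}
  [Countable L] {D : Set E}

lemma translationModulus_neg (hD : IsAddFundamentalDomain L D μ)
    (hper : ∀ g ∈ L, Function.Periodic v g) (p : ℝ≥0) (z : E) :
    translationModulus v p (μ.restrict D) (-z) = translationModulus v p (μ.restrict D) z := by
  have hper' : ∀ g ∈ L, Function.Periodic (fun x => v (x - z) - v x) g := fun g hg x => by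
    simp only [add_sub_right_comm, hper g hg _]
  rw [translationModulus, translationModulus, ← eLpNorm_add_right_of_periodic hD hper' p z,
    ← eLpNorm_neg]
  congr 1
  ext x
  simp

lemma translationModulus_add_le (hD : IsAddFundamentalDomain L D μ)
    (hv : StronglyMeasurable v)
    (hper : ∀ g ∈ L, Function.Periodic v g) {p : ℝ≥0} (hp : 1 ≤ p) (y z : E) :
    translationModulus v p (μ.restrict D) (y + z) ≤
      translationModulus v p (μ.restrict D) y + translationModulus v p (μ.restrict D) z := by
  have hmeas (u : E) : StronglyMeasurable fun x => v (x - u) :=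
    hv.comp_measurable (measurable_sub_const' u)
  have hper' : ∀ g ∈ L, Function.Periodic (fun x => v (x - y) - v x) g := fun g hg x => by
    simp only [add_sub_right_comm, hper g hg _]
  calc translationModulus v p (μ.restrict D) (y + z)
      = eLpNorm ((fun x => v (x + -z - y) - v (x + -z)) + fun x => v (x - z) - v x) p
          (μ.restrict D) := by
        rw [translationModulus]
        congr 1
        ext x
        simp [← sub_eq_add_neg, sub_sub, add_comm z y]
    _ ≤ eLpNorm (fun x => v (x + -z - y) - v (x + -z)) p (μ.restrict D)
          + translationModulus v p (μ.restrict D) z := by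
        refine eLpNorm_add_le (StronglyMeasurable.aestronglyMeasurable ?_)
          ((hmeas z).sub hv).aestronglyMeasurable (by exact_mod_cast hp)
        exact ((hmeas y).sub hv).comp_measurable (measurable_add_const (-z))
    _ = _ := by
        rw [eLpNorm_add_right_of_periodic hD hper' p (-z)]
        rfl

lemma translationModulus_le_two_mul_eLpNorm (hD : IsAddFundamentalDomain L D μ)
    (hv : StronglyMeasurable v)
    (hper : ∀ g ∈ L, Function.Periodic v g) {p : ℝ≥0} (hp : 1 ≤ p) (z : E) :
    translationModulus v p (μ.restrict D) z ≤ 2 * eLpNorm v p (μ.restrict D) := by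
  have hmeas : StronglyMeasurable fun x => v (x + -z) :=
    hv.comp_measurable (measurable_add_const (-z))
  calc translationModulus v p (μ.restrict D) z
      ≤ eLpNorm (fun x => v (x + -z)) p (μ.restrict D) + eLpNorm v p (μ.restrict D) := by
        simpa only [translationModulus, sub_eq_add_neg z, Pi.sub_def, sub_eq_add_neg _ z] using
          eLpNorm_sub_le hmeas.aestronglyMeasurable hv.aestronglyMeasurable
            (show 1 ≤ (p : ℝ≥0∞) by exact_mod_cast hp)
    _ = 2 * eLpNorm v p (μ.restrict D) := by
        rw [eLpNorm_add_right_of_periodic hD hper p (-z), two_mul]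

end TranslationModulus

/-- The nonlocal `p`-energy of `v` with kernel `a`: the extended nonnegative value of
`∫ ∫ |a (x - y)| |v y - v x| ^ p dμ(y) dρ(x)`. -/
def nonlocalEnergy {E F G : Type*} [Sub E] [MeasurableSpace E] [NormedAddCommGroup F]
    [NormedAddCommGroup G] (a : E → F) (v : E → G) (p : ℝ≥0) (μ ρ : Measure E) : ℝ≥0∞ :=
  ∫⁻ x, ∫⁻ y, ‖a (x - y)‖ₑ * ‖v y - v x‖ₑ ^ (p : ℝ) ∂μ ∂ρ

section NonlocalEnergy

variable {E F G : Type*} [AddCommGroup E] [MeasurableSpace E] [MeasurableAdd₂ E] [MeasurableNeg E]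
  [NormedAddCommGroup F] [NormedAddCommGroup G] {μ ρ : Measure E} [SFinite μ] [SFinite ρ]
  [μ.IsAddLeftInvariant] {v : E → G} {p : ℝ≥0}

lemma lintegral_enorm_mul_translationModulus_rpow [μ.IsNegInvariant] {a : E → F}
    (ha : AEStronglyMeasurable a μ) (hv : StronglyMeasurable v) (hp : p ≠ 0) :
    ∫⁻ z, ‖a z‖ₑ * translationModulus v p ρ z ^ (p : ℝ) ∂μ = nonlocalEnergy a v p μ ρ := by
  have hmeas : Measurable fun q : E × E => ‖v (q.2 - q.1) - v q.2‖ₑ ^ (p : ℝ) :=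
    (stronglyMeasurable_translate_sub hv).enorm.pow_const _
  calc ∫⁻ z, ‖a z‖ₑ * translationModulus v p ρ z ^ (p : ℝ) ∂μ
      = ∫⁻ z, ∫⁻ x, ‖a z‖ₑ * ‖v (x - z) - v x‖ₑ ^ (p : ℝ) ∂ρ ∂μ := by
        refine lintegral_congr fun z => ?_
        rw [translationModulus, eLpNorm_nnreal_pow_eq_lintegral hp]
        exact (lintegral_const_mul _ (hmeas.comp measurable_prodMk_left)).symm
    _ = ∫⁻ x, ∫⁻ z, ‖a z‖ₑ * ‖v (x - z) - v x‖ₑ ^ (p : ℝ) ∂μ ∂ρ :=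
        lintegral_lintegral_swap (ha.comp_fst.enorm.mul hmeas.aemeasurable)
    _ = nonlocalEnergy a v p μ ρ := by
        refine lintegral_congr fun x => ?_
        rw [← lintegral_sub_left_eq_self _ x]
        simp only [sub_sub_cancel]

lemma nonlocalEnergy_ne_top [μ.IsNegInvariant] {L : AddSubgroup E} [Countable L] {D : Set E}
    (hD : IsAddFundamentalDomain L D μ) {a : E → F} (ha : Integrable a μ)
    (hv : StronglyMeasurable v) (hper : ∀ g ∈ L, Function.Periodic v g) (hp : 1 ≤ p)
    (hvp : MemLp v p (μ.restrict D)) : nonlocalEnergy a v p μ (μ.restrict D) ≠ ∞ := by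
  rw [← lintegral_enorm_mul_translationModulus_rpow ha.1 hv (one_pos.trans_le hp).ne']
  refine ne_top_of_le_ne_top (b := (∫⁻ z, ‖a z‖ₑ ∂μ) * (2 * eLpNorm v p (μ.restrict D)) ^ (p : ℝ))
    (ENNReal.mul_ne_top ha.2.ne (by have := hvp.2.ne; finiteness)) ?_
  rw [← lintegral_mul_const'' _ ha.1.enorm]
  gcongr with z
  exact translationModulus_le_two_mul_eLpNorm hD hv hper hp z

lemma integral_integral_mul_norm_rpow_eq_toReal_nonlocalEnergy {a : E → ℝ}
    (ha : AEStronglyMeasurable a μ) (ha0 : ∀ z, 0 ≤ a z) (hv : StronglyMeasurable v)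
    (hρ : ρ ≪ μ) (hfin : nonlocalEnergy a v p μ ρ ≠ ∞) :
    ∫ x, ∫ y, a (x - y) * ‖v y - v x‖ ^ (p : ℝ) ∂μ ∂ρ = (nonlocalEnergy a v p μ ρ).toReal := by
  have hker : AEStronglyMeasurable (fun q : E × E => a (q.1 - q.2)) (ρ.prod μ) :=
    (ha.comp_quasiMeasurePreserving (quasiMeasurePreserving_sub μ μ)).mono_ac
      (hρ.prod .rfl)
  have hdiff : StronglyMeasurable fun q : E × E => ‖v q.2 - v q.1‖ ^ (p : ℝ) :=
    ((hv.comp_measurable measurable_snd).sub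
      (hv.comp_measurable measurable_fst)).norm.measurable.pow_const _ |>.stronglyMeasurable
  have henorm (x y : E) : ‖a (x - y) * ‖v y - v x‖ ^ (p : ℝ)‖ₑ =
      ‖a (x - y)‖ₑ * ‖v y - v x‖ₑ ^ (p : ℝ) := by
    rw [enorm_mul, Real.enorm_rpow_of_nonneg (norm_nonneg _) p.coe_nonneg, enorm_norm]
  simpa only [nonlocalEnergy, henorm, Real.norm_of_nonneg (mul_nonneg (ha0 _)
    (Real.rpow_nonneg (norm_nonneg _) _))] using integral_integral_norm_eq_toReal
      (f := fun x y => a (x - y) * ‖v y - v x‖ ^ (p : ℝ)) (hker.mul hdiff.aestronglyMeasurable)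
      (by simpa only [nonlocalEnergy, henorm] using hfin)

end NonlocalEnergy

section Poincare

variable {G : Type*} [NormedAddCommGroup G] [NormedSpace ℝ G] [CompleteSpace G] {p : ℝ≥0}

section ZeroMean

variable {E : Type*} [AddCommGroup E] [MeasurableSpace E] {μ : Measure E}
  [μ.IsAddLeftInvariant] {L : AddSubgroup E} [Countable L] {D : Set E} {v : E → G}

lemma measure_mul_enorm_rpow_le_setLIntegral_of_integral_eq_zero [MeasurableAdd E]
    (hD : IsAddFundamentalDomain L D μ) (hDfin : μ D ≠ ∞) (hp : 1 ≤ p)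
    (hper : ∀ g ∈ L, Function.Periodic v g) (hint : IntegrableOn v D μ)
    (hmean : ∫ x in D, v x ∂μ = 0) (x : E) :
    μ D * ‖v x‖ₑ ^ (p : ℝ) ≤ ∫⁻ z in D, ‖v (x + z) - v x‖ₑ ^ (p : ℝ) ∂μ := by
  have : IsFiniteMeasure (μ.restrict D) := ⟨by simpa using hDfin.lt_top⟩
  have hp0 : p ≠ 0 := (one_pos.trans_le hp).ne'
  have hper' : ∀ g ∈ L, Function.Periodic (fun z => v z - v x) g := fun g hg z => by
    simp only [hper g hg z]
  have h := eLpNorm_const_le_eLpNorm_sub_const (p := p) (by exact_mod_cast hp) hint hmean (v x)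
  rw [← eLpNorm_add_right_of_periodic hD hper' p x,
    ← ENNReal.rpow_le_rpow_iff (z := p) (by positivity), eLpNorm_nnreal_pow_eq_lintegral hp0,
    eLpNorm_nnreal_pow_eq_lintegral hp0, lintegral_const, Measure.restrict_apply_univ] at h
  simpa only [mul_comm, add_comm] using h

lemma eLpNorm_le_of_forall_translationModulus_le [MeasurableAdd₂ E] [SFinite μ]
    (hD : IsAddFundamentalDomain L D μ) (hDfin : μ D ≠ ∞) (hp : 1 ≤ p)
    (hv : StronglyMeasurable v) (hper : ∀ g ∈ L, Function.Periodic v g)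
    (hint : IntegrableOn v D μ) (hmean : ∫ x in D, v x ∂μ = 0) {B : ℝ≥0∞}
    (hB : ∀ z ∈ D, translationModulus v p (μ.restrict D) z ≤ B) :
    eLpNorm v p (μ.restrict D) ≤ B := by
  rcases eq_or_ne (μ D) 0 with hD0 | hD0
  · simp [Measure.restrict_eq_zero.2 hD0]
  have hp0 : p ≠ 0 := (one_pos.trans_le hp).ne'
  have hmeas : Measurable fun q : E × E => ‖v (q.1 + q.2) - v q.1‖ₑ ^ (p : ℝ) :=
    ((hv.comp_measurable measurable_add).sub (hv.comp_measurable measurable_fst)).enorm.pow_const _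
  have hpow : μ D * eLpNorm v p (μ.restrict D) ^ (p : ℝ) ≤ μ D * B ^ (p : ℝ) :=
    calc μ D * eLpNorm v p (μ.restrict D) ^ (p : ℝ)
        = ∫⁻ x in D, μ D * ‖v x‖ₑ ^ (p : ℝ) ∂μ := by
          rw [eLpNorm_nnreal_pow_eq_lintegral hp0, lintegral_const_mul' _ _ hDfin]
      _ ≤ ∫⁻ x in D, ∫⁻ z in D, ‖v (x + z) - v x‖ₑ ^ (p : ℝ) ∂μ ∂μ :=
          lintegral_mono
            (measure_mul_enorm_rpow_le_setLIntegral_of_integral_eq_zero hD hDfin hp hper hint hmean)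
      _ = ∫⁻ z in D, translationModulus v p (μ.restrict D) (-z) ^ (p : ℝ) ∂μ := by
          rw [lintegral_lintegral_swap hmeas.aemeasurable]
          simp only [translationModulus, eLpNorm_nnreal_pow_eq_lintegral hp0, sub_neg_eq_add]
      _ ≤ ∫⁻ _ in D, B ^ (p : ℝ) ∂μ := by
          refine lintegral_mono_ae ?_
          filter_upwards [ae_restrict_mem₀ hD.nullMeasurableSet] with z hz
          rw [translationModulus_neg hD hper]
          gcongr
          exact hB z hz
      _ = μ D * B ^ (p : ℝ) := by rw [setLIntegral_const, mul_comm]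
  rwa [ENNReal.mul_le_mul_iff_right hD0 hDfin, ENNReal.rpow_le_rpow_iff (by positivity)] at hpow

end ZeroMean

variable {E : Type*} [NormedAddCommGroup E] [NormedSpace ℝ E] [FiniteDimensional ℝ E]
  [MeasurableSpace E] [BorelSpace E] {μ : Measure E} [μ.IsAddHaarMeasure] {L : AddSubgroup E}
  [Countable L] {D : Set E}

lemma exists_eLpNorm_rpow_le_mul_nonlocalEnergy {F : Type*} [NormedAddCommGroup F] {a : E → F}
    (ha : Integrable a μ) (ha0 : ¬ a =ᵐ[μ] 0) (hD : IsAddFundamentalDomain L D μ)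
    (hDb : Bornology.IsBounded D) (hp : 1 ≤ p) :
    ∃ M : ℝ≥0, ∀ v : E → G, StronglyMeasurable v → (∀ g ∈ L, Function.Periodic v g) →
      IntegrableOn v D μ → ∫ x in D, v x ∂μ = 0 →
      eLpNorm v p (μ.restrict D) ^ (p : ℝ) ≤ M * nonlocalEnergy a v p μ (μ.restrict D) := by
  obtain ⟨C, hC⟩ := exists_forall_subadditive_le_mul_lintegral ha ha0 hDb
  set A := ∫⁻ z, ‖a z‖ₑ ∂μ
  have hA : A ≠ ∞ := ha.2.ne
  have hp1 : (1 : ℝ) ≤ p := by exact_mod_cast hp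
  refine ⟨(C ^ (p : ℝ) * A ^ ((p : ℝ) - 1)).toNNReal, fun v hv hper hint hmean => ?_⟩
  have hN := measurable_translationModulus hv p (μ.restrict D)
  rw [ENNReal.coe_toNNReal (by finiteness)]
  calc eLpNorm v p (μ.restrict D) ^ (p : ℝ)
      ≤ (C * ∫⁻ z, ‖a z‖ₑ * translationModulus v p (μ.restrict D) z ∂μ) ^ (p : ℝ) := by
        gcongr
        exact eLpNorm_le_of_forall_translationModulus_le hD hDb.measure_lt_top.ne hp hv hper
          hint hmean (hC _ hN.aemeasurable (translationModulus_add_le hD hv hper hp)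
            (translationModulus_neg hD hper p))
    _ ≤ C ^ (p : ℝ) * (A ^ ((p : ℝ) - 1) *
          ∫⁻ z, ‖a z‖ₑ * translationModulus v p (μ.restrict D) z ^ (p : ℝ) ∂μ) := by
        rw [ENNReal.mul_rpow_of_nonneg _ _ p.coe_nonneg]
        gcongr
        exact lintegral_mul_rpow_le ha.1.enorm hN.aemeasurable hp1
    _ = C ^ (p : ℝ) * A ^ ((p : ℝ) - 1) * nonlocalEnergy a v p μ (μ.restrict D) := by
        rw [lintegral_enorm_mul_translationModulus_rpow ha.1 hv (one_pos.trans_le hp).ne',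
          mul_assoc]

theorem stmt6_general {a : E → ℝ} (ha : Integrable a μ) (hanonneg : ∀ z, 0 ≤ a z)
    (ha0 : ¬ a =ᵐ[μ] 0) (hD : IsAddFundamentalDomain L D μ) (hDb : Bornology.IsBounded D)
    (hp : 1 ≤ p) :
    ∃ C : ℝ, 0 < C ∧ ∀ v : E → G, StronglyMeasurable v → (∀ g ∈ L, Function.Periodic v g) →
      MemLp v p (μ.restrict D) → ∫ x in D, v x ∂μ = 0 →
      C * ∫ x in D, ‖v x‖ ^ (p : ℝ) ∂μ ≤
        (1 / 2) * ∫ x in D, ∫ y, a (x - y) * ‖v y - v x‖ ^ (p : ℝ) ∂μ ∂μ := by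
  obtain ⟨M, hM⟩ := exists_eLpNorm_rpow_le_mul_nonlocalEnergy (G := G) ha ha0 hD hDb hp
  have : IsFiniteMeasure (μ.restrict D) := ⟨by simpa using hDb.measure_lt_top⟩
  refine ⟨(2 * (M + 1))⁻¹, by positivity, fun v hv hper hvp hmean => ?_⟩
  have hp0 : p ≠ 0 := (one_pos.trans_le hp).ne'
  have hfin := nonlocalEnergy_ne_top hD ha hv hper hp hvp
  have hnorm : ∫ x in D, ‖v x‖ ^ (p : ℝ) ∂μ = (eLpNorm v p (μ.restrict D) ^ (p : ℝ)).toReal := by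
    rw [← ENNReal.toReal_rpow, toReal_eLpNorm hvp.1, lpNorm_nnreal_eq_integral_norm_rpow hp0 hvp.1,
      Real.rpow_inv_rpow (by positivity) (by exact_mod_cast hp0)]
  have hle : ∫ x in D, ‖v x‖ ^ (p : ℝ) ∂μ ≤ M * (nonlocalEnergy a v p μ (μ.restrict D)).toReal := by
    rw [hnorm]
    simpa using ENNReal.toReal_mono (by finiteness)
      (hM v hv hper (hvp.integrable (by exact_mod_cast hp)) hmean)
  rw [integral_integral_mul_norm_rpow_eq_toReal_nonlocalEnergy ha.1 hanonneg hv
    Measure.restrict_le_self.absolutelyContinuous hfin, inv_mul_le_iff₀ (by positivity)]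
  linarith [ENNReal.toReal_nonneg (a := nonlocalEnergy a v p μ (μ.restrict D))]

end Poincare

section Cube

variable (d : ℕ)

/-- The lattice `ℤ^d` in `ℝ^d`. -/
def integerLattice : AddSubgroup (Fin d → ℝ) :=
  (Submodule.span ℤ (range (Pi.basisFun ℝ (Fin d)))).toAddSubgroup

instance : Countable (integerLattice d) :=
  inferInstanceAs (Countable (Submodule.span ℤ (range (Pi.basisFun ℝ (Fin d)))))

lemma cube_eq_fundamentalDomain : cube d = ZSpan.fundamentalDomain (Pi.basisFun ℝ (Fin d)) :=
  ZSpan.fundamentalDomain_pi_basisFun.symm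

lemma isAddFundamentalDomain_cube : IsAddFundamentalDomain (integerLattice d) (cube d) := by
  rw [cube_eq_fundamentalDomain]
  exact ZSpan.isAddFundamentalDomain' _ volume

lemma isBounded_cube : Bornology.IsBounded (cube d) := by
  rw [cube_eq_fundamentalDomain]
  exact ZSpan.fundamentalDomain_isBounded _

variable {d}

lemma periodic_of_mem_integerLattice {α : Type*} {v : (Fin d → ℝ) → α}
    (hv : ∀ ξ, ∀ k : Fin d → ℤ, v (ξ + fun i => (k i : ℝ)) = v ξ) {g : Fin d → ℝ}
    (hg : g ∈ integerLattice d) : Function.Periodic v g := fun ξ => by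
  rw [integerLattice, Submodule.mem_toAddSubgroup, Module.Basis.mem_span_iff_repr_mem] at hg
  choose k hk using hg
  obtain rfl : (fun i => (k i : ℝ)) = g := funext fun i => by simpa using hk i
  exact hv ξ k

end Cube

/-- Spectral gap (Poincaré-type) inequality: there is `C₂ > 0` such that for every
`v ∈ L²(𝕋^d)` with zero mean,
`(1/2) ∫_{𝕋^d} ∫_{ℝ^d} a(ξ-η)(v(η)-v(ξ))² dη dξ ≥ C₂ ‖v‖²_{L²(𝕋^d)}`. -/
theorem stmt6 {d : ℕ} (hd : 1 ≤ d)
    (a : (Fin d → ℝ) → ℝ) (hameas : Measurable a) (haint : Integrable a)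
    (hanonneg : ∀ z, 0 ≤ a z) (hamass : ∫ z, a z = 1)
    (hamom : Integrable (fun z => ‖z‖ ^ 2 * a z))
    (hasymm : ∀ z, a (-z) = a z) :
    ∃ C₂ : ℝ, 0 < C₂ ∧
      ∀ v : (Fin d → ℝ) → ℝ, Measurable v →
        (∀ ξ, ∀ k : Fin d → ℤ, v (ξ + fun i => (k i : ℝ)) = v ξ) →
        IntegrableOn (fun ξ => (v ξ) ^ 2) (cube d) →
        (∫ ξ in cube d, v ξ) = 0 →
        C₂ * ∫ ξ in cube d, (v ξ) ^ 2 ≤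
          (1 / 2) * ∫ ξ in cube d, ∫ η, a (ξ - η) * (v η - v ξ) ^ 2 := by
  have ha0 : ¬ a =ᵐ[volume] 0 := fun h => by simp [integral_congr_ae h] at hamass
  obtain ⟨C, hC, h⟩ := stmt6_general (G := ℝ) haint hanonneg ha0
    (isAddFundamentalDomain_cube d) (isBounded_cube d) one_le_two
  exact ⟨C, hC, fun v hv hper hv2 hmean => by
    simpa using h v hv.stronglyMeasurable (fun _ => periodic_of_mem_integerLattice hper)
      ((memLp_two_iff_integrable_sq hv.aestronglyMeasurable).2 hv2) hmean⟩
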